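/- Let G be a Carnot group and let X₁, …, X_m be a basis of its horizontal layer 𝔊_H. For every X, Y ∈ 𝔊_H, p ∈ G and r > 0, there exists a curve γ ∈ C¹_H([0, r], G) with γ(0) = γ(r) = p, γ'(0) = X, γ'(r) = Y, and sup_t ‖γ'(t)‖ = max(‖X‖, ‖Y‖). -/

import Mathlib

open Filter Topology Set Metric

variable {G : Type*} [Group G] [MetricSpace G]
variable {H : Type*} [NormedAddCommGroup H] [NormedSpace ℝ H]

/-- `γ` is a curve of class `C¹_H` on `s` with (horizontal) velocity `γ'`. -/
def IsC1H (expMap : H → G) (γ : ℝ → G) (γ' : ℝ → H) (s : Set ℝ) : Prop :=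
  ContinuousOn γ s ∧ ContinuousOn γ' s ∧
    ∀ t ∈ s, Tendsto (fun u => dist (γ u) (γ t * expMap ((u - t) • γ' t)) / |u - t|)
      (𝓝[s \ {t}] t) (𝓝 0)


/-!
The velocity follows `X` on the first half of `[0, r]` and `Y` on the second, with cubic bumps `f`
making `p * exp (f t • v)` return to `p`, and the two halves are glued where both velocities vanish.
Such a curve has velocity `f' t • v` provided `dist (exp (s • v)) 1 = O(s)`, and this bound is the
analytic point. It follows from integrability of continuous profiles by applying the Baire category
theorem twice. If it fails, the profiles `φ` for which `dist (exp (((u - t) * φ t) • v)) 1` and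
`dist (exp (((u - t) * φ u) • v)) 1` differ by more than `2 * |u - t|` for some `t, u` in every open
set are generic. For a curve with velocity `φ • v`, on the other hand, both are within `|u - t|` of
the distance between the points at `t` and `u`, uniformly on some open set.
-/

theorem isBigO_sub_of_isBigO_sub_smul {𝕜 E F : Type*} [NormedField 𝕜] [SeminormedAddCommGroup E]
    [NormedSpace 𝕜 E] [SeminormedAddCommGroup F] {f : E → F} {q : 𝕜} (hf : ContinuousAt f 0)
    (hq : ‖q‖ < 1) (h : (fun x => f x - f (q • x)) =O[𝓝 0] fun x => x) :
    (fun x => f x - f 0) =O[𝓝 0] fun x => x := by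
  obtain ⟨C, hC⟩ := h.bound
  obtain ⟨δ, hδ, hball⟩ := Metric.eventually_nhds_iff_ball.1 hC
  refine .of_bound (C / (1 - ‖q‖)) ?_
  filter_upwards [ball_mem_nhds (0 : E) hδ] with x hx
  have hpow (n : ℕ) : ‖q ^ n • x‖ = ‖q‖ ^ n * ‖x‖ := by rw [norm_smul, norm_pow]
  have hstep (n : ℕ) : dist (f (q ^ n • x)) (f (q ^ (n + 1) • x)) ≤ C * ‖x‖ * ‖q‖ ^ n := by
    have hmem : q ^ n • x ∈ ball (0 : E) δ := by
      rw [mem_ball_zero_iff] at hx ⊢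
      rw [hpow]
      exact (mul_le_of_le_one_left (norm_nonneg x) (pow_le_one₀ (norm_nonneg q) hq.le)).trans_lt hx
    calc dist (f (q ^ n • x)) (f (q ^ (n + 1) • x))
        = ‖f (q ^ n • x) - f (q • q ^ n • x)‖ := by rw [dist_eq_norm, smul_smul, pow_succ']
      _ ≤ C * ‖q ^ n • x‖ := hball _ hmem
      _ = C * ‖x‖ * ‖q‖ ^ n := by rw [hpow]; ring
  have hlim : Tendsto (fun n : ℕ => f (q ^ n • x)) atTop (𝓝 (f 0)) := by
    have hzero := (tendsto_pow_atTop_nhds_zero_of_norm_lt_one hq).smul_const x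
    rw [zero_smul] at hzero
    exact hf.tendsto.comp hzero
  have hdist := dist_le_of_le_geometric_of_tendsto₀ _ _ hq hstep hlim
  rw [pow_zero, one_smul, dist_eq_norm] at hdist
  exact hdist.trans_eq (by ring)

theorem exists_isOpen_forall_of_eventually {X : Type*} [PseudoMetricSpace X] [BaireSpace X]
    [Nonempty X] {R : X → X → Prop} (hR : ∀ u, IsClosed {t | R t u})
    (h : ∀ t, ∀ᶠ u in 𝓝 t, R t u) :
    ∃ O : Set X, IsOpen O ∧ O.Nonempty ∧ ∀ t ∈ O, ∀ u ∈ O, R t u := by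
  let S (k : ℕ) : Set X := {t | ∀ u, dist u t < 1 / ((k : ℝ) + 1) → R t u}
  have hS_closed (k : ℕ) : IsClosed (S k) := by
    simp only [S, ofPred_forall]
    exact isClosed_iInter fun u =>
      isClosed_imp (isOpen_lt (continuous_const.dist continuous_id) continuous_const) (hR u)
  have hS_cover : ⋃ k, S k = univ := by
    refine eq_univ_of_forall fun t => ?_
    obtain ⟨η, hη, hRt⟩ := Metric.eventually_nhds_iff.1 (h t)
    obtain ⟨k, hk⟩ := exists_nat_one_div_lt hη
    exact mem_iUnion.2 ⟨k, fun u hu => hRt (hu.trans hk)⟩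
  obtain ⟨k, x, hx⟩ := nonempty_interior_of_iUnion_of_closed hS_closed hS_cover
  have hr : (0 : ℝ) < 1 / ((k : ℝ) + 1) / 2 := by positivity
  refine ⟨interior (S k) ∩ ball x (1 / ((k : ℝ) + 1) / 2), isOpen_interior.inter isOpen_ball,
    ⟨x, hx, mem_ball_self hr⟩, fun t ht u hu => interior_subset ht.1 u ?_⟩
  calc dist u t ≤ dist u x + dist t x := dist_triangle_right u t x
    _ < 1 / ((k : ℝ) + 1) / 2 + 1 / ((k : ℝ) + 1) / 2 := add_lt_add hu.2 ht.2
    _ = 1 / ((k : ℝ) + 1) := add_halves _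

theorem exists_boundedContinuous_eq_eq {Y : Type*} [TopologicalSpace Y] [T4Space Y]
    (φ : BoundedContinuousFunction Y ℝ) {x y : Y} (hxy : x ≠ y) {a b ε : ℝ}
    (ha : |a - φ x| ≤ ε) (hb : |b - φ y| ≤ ε) :
    ∃ ψ : BoundedContinuousFunction Y ℝ, ψ x = a ∧ ψ y = b ∧ dist ψ φ ≤ ε := by
  classical
  have hε : 0 ≤ ε := (abs_nonneg _).trans ha
  let g : BoundedContinuousFunction ({x, y} : Set Y) ℝ :=
    .ofNormedAddCommGroup (fun t => if (t : Y) = x then a - φ x else b - φ y)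
      continuous_of_discreteTopology ε fun t => by split_ifs <;> assumption
  obtain ⟨ψ, hψ_norm, hψ_eq⟩ :=
    BoundedContinuousFunction.exists_norm_eq_domRestrict_eq_of_closed g (toFinite {x, y}).isClosed
  have hx : ψ x = a - φ x := by simpa [g] using congr($hψ_eq ⟨x, by simp⟩)
  have hy : ψ y = b - φ y := by simpa [g, hxy.symm] using congr($hψ_eq ⟨y, by simp⟩)
  refine ⟨φ + ψ, by simp [hx], by simp [hy], ?_⟩
  rw [dist_eq_norm, add_sub_cancel_left, hψ_norm]
  exact BoundedContinuousFunction.norm_ofNormedAddCommGroup_le _ hε _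

/-- The rescalings `s ↦ N (h * s) / |h|` vary by more than `K` near every point, for arbitrarily
small `h`. This is how failure of linear growth of `N` at `0` enters the Baire argument. -/
def OscillatesAtSmallScales (N : ℝ → ℝ) (K : ℝ) : Prop :=
  ∀ c ε : ℝ, 0 < ε → ∃ᶠ h in 𝓝[≠] (0 : ℝ), ∃ a ∈ closedBall c ε, ∃ b ∈ closedBall c ε,
    K * |h| < |N (h * a) - N (h * b)|

theorem exists_mul_eq_mem_closedBall (c : ℝ) {ε : ℝ} (hε : 0 < ε) :
    ∃ a ∈ closedBall c ε, a ≠ 0 ∧ ∃ q, |q| < 1 ∧ q * a = c := by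
  obtain ⟨a, ha, hac⟩ : ∃ a ∈ closedBall c ε, |c| < |a| := by
    rcases le_total 0 c with hc | hc
    · exact ⟨c + ε, by simp [abs_of_pos hε], by
        rw [abs_of_nonneg hc, abs_of_pos (by linarith)]; linarith⟩
    · exact ⟨c - ε, by simp [abs_of_pos hε], by
        rw [abs_of_nonpos hc, abs_of_neg (by linarith)]; linarith⟩
  have ha_pos : 0 < |a| := (abs_nonneg c).trans_lt hac
  have ha_ne : a ≠ 0 := abs_pos.1 ha_pos
  exact ⟨a, ha, ha_ne, c / a, by rwa [abs_div, div_lt_one ha_pos], div_mul_cancel₀ c ha_ne⟩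

theorem isBigO_sub_of_not_oscillatesAtSmallScales {N : ℝ → ℝ} {K : ℝ} (hN : ContinuousAt N 0)
    (hosc : ¬OscillatesAtSmallScales N K) :
    (fun s => N s - N 0) =O[𝓝 0] fun s => s := by
  simp only [OscillatesAtSmallScales, not_forall, not_frequently, not_exists, not_and,
    not_lt] at hosc
  obtain ⟨c, ε, hε, hsmall⟩ := hosc
  obtain ⟨a, ha, ha_ne, q, hq, hqa⟩ := exists_mul_eq_mem_closedBall c hε
  have hscale : Tendsto (fun s : ℝ => s / a) (𝓝[≠] 0) (𝓝[≠] 0) := by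
    refine tendsto_nhdsWithin_iff.2 ⟨?_, ?_⟩
    · exact (Continuous.tendsto' (by fun_prop) 0 0 (by simp)).mono_left nhdsWithin_le_nhds
    · filter_upwards [self_mem_nhdsWithin] with s hs using div_ne_zero hs ha_ne
  refine isBigO_sub_of_isBigO_sub_smul (q := q) hN hq ?_
  refine .of_bound (K / |a|) ?_
  filter_upwards [eventually_nhdsWithin_iff.1 (hscale.eventually hsmall)] with s hs
  rcases eq_or_ne s 0 with rfl | hs_ne
  · simp
  have hbound := hs hs_ne a ha c (mem_closedBall_self hε.le)
  rw [div_mul_cancel₀ s ha_ne, ← hqa, mul_left_comm, div_mul_cancel₀ s ha_ne, abs_div] at hbound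
  exact hbound.trans_eq (by rw [Real.norm_eq_abs]; ring)

/-- The velocity profiles `φ` for which the displacements `N ((u - t) * φ t)` and
`N ((u - t) * φ u)`, predicted between `t` and `u` by the velocities at either end, differ by more
than `K * |u - t|` for some `t, u ∈ O`. It is applied to `N s = dist (E s) 1` with `E` a
one-parameter subgroup and `K = 2`. -/
def oscillationSet (N : ℝ → ℝ) (K : ℝ) (O : Set ℝ) : Set (BoundedContinuousFunction ℝ ℝ) :=
  {φ | ∃ t ∈ O, ∃ u ∈ O, K * |u - t| < |N ((u - t) * φ t) - N ((u - t) * φ u)|}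

theorem isOpen_oscillationSet {N : ℝ → ℝ} (hN : Continuous N) (K : ℝ) (O : Set ℝ) :
    IsOpen (oscillationSet N K O) := by
  have heval (t : ℝ) : Continuous fun φ : BoundedContinuousFunction ℝ ℝ => φ t :=
    (BoundedContinuousFunction.evalCLM ℝ t).continuous
  simp only [oscillationSet, ← exists_prop, ofPred_exists]
  refine isOpen_iUnion fun t => isOpen_iUnion fun _ => isOpen_iUnion fun u =>
    isOpen_iUnion fun _ => isOpen_lt continuous_const ?_
  have hN_eval (w : ℝ) : Continuous fun φ : BoundedContinuousFunction ℝ ℝ => N ((u - t) * φ w) :=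
    hN.comp (continuous_const.mul (heval w))
  exact ((hN_eval t).sub (hN_eval u)).abs

theorem OscillatesAtSmallScales.dense_oscillationSet {N : ℝ → ℝ} {K : ℝ}
    (hosc : OscillatesAtSmallScales N K) {O : Set ℝ} (hO : IsOpen O) (hne : O.Nonempty) :
    Dense (oscillationSet N K O) := by
  obtain ⟨x, hx⟩ := hne
  refine Metric.dense_iff.2 fun φ ε hε => ?_
  have hshift : Tendsto (fun h : ℝ => x + h) (𝓝[≠] 0) (𝓝 x) :=
    (Continuous.tendsto' (by fun_prop) 0 x (add_zero x)).mono_left nhdsWithin_le_nhds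
  have hnear : ∀ᶠ h in 𝓝[≠] (0 : ℝ), φ (x + h) ∈ ball (φ x) (ε / 4) :=
    (φ.continuous.continuousAt.tendsto.comp hshift).eventually (ball_mem_nhds _ (by positivity))
  obtain ⟨h, ⟨a, ha, b, hb, hab⟩, hφh, hhO, hh⟩ :=
    ((hosc (φ x) (ε / 4) (by positivity)).and_eventually <|
      hnear.and ((hshift.eventually (hO.mem_nhds hx)).and self_mem_nhdsWithin)).exists
  have ha' : |a - φ x| ≤ ε / 2 := (mem_closedBall.1 ha).trans (by linarith)
  have hb' : |b - φ (x + h)| ≤ ε / 2 :=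
    (dist_triangle_right b (φ (x + h)) (φ x)).trans (by
      linarith [mem_closedBall.1 hb, mem_ball.1 hφh])
  obtain ⟨ψ, hψx, hψh, hψφ⟩ :=
    exists_boundedContinuous_eq_eq φ (by simpa [eq_comm] using hh) ha' hb'
  refine ⟨ψ, mem_ball.2 (hψφ.trans_lt (half_lt_self hε)), x, hx, x + h, hhO, ?_⟩
  rwa [hψx, hψh, add_sub_cancel_left]

theorem OscillatesAtSmallScales.exists_forall_mem_oscillationSet {N : ℝ → ℝ} {K : ℝ}
    (hosc : OscillatesAtSmallScales N K) (hN : Continuous N) :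
    ∃ φ, ∀ O : Set ℝ, IsOpen O → O.Nonempty → φ ∈ oscillationSet N K O := by
  open TopologicalSpace in
  obtain ⟨φ, hφ⟩ := (dense_biInter_of_isOpen (S := countableBasis ℝ) (f := oscillationSet N K)
    (fun O _ => isOpen_oscillationSet hN K O) (countable_countableBasis ℝ)
    fun O hO => hosc.dense_oscillationSet (isOpen_of_mem_countableBasis hO)
      (nonempty_of_mem_countableBasis hO)).nonempty
  refine ⟨φ, fun O hO ⟨x, hx⟩ => ?_⟩
  obtain ⟨B, hB, -, hBO⟩ := (isBasis_countableBasis ℝ).exists_subset_of_mem_open hx hO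
  obtain ⟨t, ht, u, hu, htu⟩ := mem_iInter₂.1 hφ B hB
  exact ⟨t, hBO ht, u, hBO hu, htu⟩

theorem isC1H_iff_isLittleO {e : H → G} (he : e 0 = 1) {γ : ℝ → G} {γ' : ℝ → H} {s : Set ℝ} :
    IsC1H e γ γ' s ↔ ContinuousOn γ s ∧ ContinuousOn γ' s ∧ ∀ t ∈ s,
      (fun u => dist (γ u) (γ t * e ((u - t) • γ' t))) =o[𝓝[s] t] fun u => u - t := by
  refine and_congr_right' (and_congr_right' (forall₂_congr fun t ht => ?_))
  conv_rhs => rw [← insert_eq_of_mem ht, ← insert_sdiff_singleton]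
  rw [Asymptotics.isLittleO_insert (by simp [he]), ← Asymptotics.isLittleO_norm_right]
  refine (Asymptotics.isLittleO_iff_tendsto' ?_).symm
  filter_upwards [self_mem_nhdsWithin] with u hu hut
  exact absurd (sub_eq_zero.1 (norm_eq_zero.1 hut)) hu.2

theorem isC1H_smul_iff {e : H → G} {v : H} {γ : ℝ → G} {φ : ℝ → ℝ} {s : Set ℝ}
    (hφ : ContinuousOn φ s) :
    IsC1H e γ (fun t => φ t • v) s ↔ IsC1H (fun a : ℝ => e (a • v)) γ φ s := by
  have hφv : ContinuousOn (fun t => φ t • v) s := hφ.smul continuousOn_const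
  simp only [IsC1H, smul_smul, smul_eq_mul, hφ, hφv, true_and]

theorem IsC1H.congr {e : H → G} {γ₁ γ₂ : ℝ → G} {γ₁' γ₂' : ℝ → H} {s : Set ℝ}
    (h : IsC1H e γ₁ γ₁' s) (hγ : EqOn γ₂ γ₁ s) (hγ' : EqOn γ₂' γ₁' s) : IsC1H e γ₂ γ₂' s := by
  refine ⟨h.1.congr hγ, h.2.1.congr hγ', fun t ht => (h.2.2 t ht).congr' ?_⟩
  filter_upwards [self_mem_nhdsWithin] with u hu
  rw [hγ hu.1, hγ ht, hγ' ht]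

theorem IsC1H.union {e : H → G} {γ : ℝ → G} {γ' : ℝ → H} {s t : Set ℝ} (hs : IsClosed s)
    (ht : IsClosed t) (hγs : IsC1H e γ γ' s) (hγt : IsC1H e γ γ' t) : IsC1H e γ γ' (s ∪ t) := by
  have hone {r : Set ℝ} (hr : IsClosed r) (hγr : IsC1H e γ γ' r) (x : ℝ) :
      Tendsto (fun u => dist (γ u) (γ x * e ((u - x) • γ' x)) / |u - x|) (𝓝[r \ {x}] x) (𝓝 0) := by
    by_cases hx : x ∈ r
    · exact hγr.2.2 x hx
    · have hbot : 𝓝[r \ {x}] x = ⊥ :=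
        notMem_closure_iff_nhdsWithin_eq_bot.1 fun hcl =>
          hx (hr.closure_subset (closure_mono sdiff_subset hcl))
      rw [hbot]
      exact tendsto_bot
  refine ⟨hγs.1.union_of_isClosed hγt.1 hs ht, hγs.2.1.union_of_isClosed hγt.2.1 hs ht,
    fun x _ => ?_⟩
  rw [union_sdiff_distrib, nhdsWithin_union]
  exact (hone hs hγs x).sup (hone ht hγt x)

theorem piecewise_eqOn_of_eqOn_inter {α β : Type*} {f g : α → β} {s t : Set α}
    [∀ x, Decidable (x ∈ s)] (h : EqOn f g (s ∩ t)) : EqOn (s.piecewise f g) g t := by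
  intro x hx
  by_cases hxs : x ∈ s
  · rw [piecewise_eq_of_mem _ _ _ hxs, h ⟨hxs, hx⟩]
  · exact piecewise_eq_of_notMem _ _ _ hxs

theorem IsC1H.exists_glue {e : H → G} {γ₁ γ₂ : ℝ → G} {γ₁' γ₂' : ℝ → H} {s t : Set ℝ}
    (h₁ : IsC1H e γ₁ γ₁' s) (h₂ : IsC1H e γ₂ γ₂' t) (hs : IsClosed s) (ht : IsClosed t)
    (hγ : EqOn γ₁ γ₂ (s ∩ t)) (hγ' : EqOn γ₁' γ₂' (s ∩ t)) :
    ∃ γ γ', IsC1H e γ γ' (s ∪ t) ∧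
      EqOn γ γ₁ s ∧ EqOn γ γ₂ t ∧ EqOn γ' γ₁' s ∧ EqOn γ' γ₂' t := by
  classical
  have hγs := piecewise_eqOn s γ₁ γ₂
  have hγs' := piecewise_eqOn s γ₁' γ₂'
  have hγt := piecewise_eqOn_of_eqOn_inter hγ
  have hγt' := piecewise_eqOn_of_eqOn_inter hγ'
  exact ⟨_, _, .union hs ht (h₁.congr hγs hγs') (h₂.congr hγt hγt'), hγs, hγt, hγs', hγt'⟩

theorem map_zero_of_map_add {A M : Type*} [AddMonoid A] [Group M] {E : A → M}
    (hE : ∀ s t, E (s + t) = E s * E t) : E 0 = 1 := by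
  simpa using hE 0 0

theorem dist_mul_right_self [IsIsometricSMul G G] (a b : G) : dist (a * b) a = dist b 1 := by
  rw [← dist_mul_left a b 1, mul_one]

section OneParameterSubgroup

variable [IsIsometricSMul G G] {E : ℝ → G} (hE : ∀ s t, E (s + t) = E s * E t)

include hE

theorem dist_map_of_map_add (s t : ℝ) : dist (E s) (E t) = dist (E (s - t)) 1 := by
  rw [← dist_mul_right_self (E t), ← hE, add_sub_cancel]

theorem dist_map_neg_of_map_add (s : ℝ) : dist (E (-s)) 1 = dist (E s) 1 := by
  rw [← zero_sub, ← dist_map_of_map_add hE, map_zero_of_map_add hE, dist_comm]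

theorem continuous_of_map_add (h : ContinuousAt E 0) : Continuous E := by
  refine continuous_iff_continuousAt.2 fun t => tendsto_iff_dist_tendsto_zero.2 ?_
  simp only [dist_map_of_map_add hE _ t, ← map_zero_of_map_add hE]
  exact (tendsto_iff_dist_tendsto_zero.1 h).comp (tendsto_sub_nhds_zero_iff.2 tendsto_id)

theorem continuous_of_isC1H {γ : ℝ → G} (hγ : IsC1H E γ (fun _ => 1) univ) : Continuous E := by
  obtain ⟨hγ_cont, -, hγ_vel⟩ := (isC1H_iff_isLittleO (map_zero_of_map_add hE)).1 hγ
  have hsub : Tendsto (fun u : ℝ => u - 0) (𝓝 0) (𝓝 0) :=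
    tendsto_sub_nhds_zero_iff.2 tendsto_id
  have hvel : Tendsto (fun u => dist (γ u) (γ 0 * E u)) (𝓝 0) (𝓝 0) := by
    simpa using (hγ_vel 0 (mem_univ 0)).isBigO.trans_tendsto (by simpa using hsub)
  have hpos : Tendsto (fun u => dist (γ u) (γ 0)) (𝓝 0) (𝓝 0) :=
    tendsto_iff_dist_tendsto_zero.1 (continuousOn_univ.1 hγ_cont).continuousAt
  refine continuous_of_map_add hE (tendsto_iff_dist_tendsto_zero.2 ?_)
  refine squeeze_zero (fun _ => dist_nonneg) (fun u => ?_) (by simpa using hvel.add hpos)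
  calc dist (E u) (E 0) = dist (γ 0 * E u) (γ 0) := by
        rw [map_zero_of_map_add hE, dist_mul_right_self]
    _ ≤ dist (γ u) (γ 0 * E u) + dist (γ u) (γ 0) := dist_triangle_left _ _ _

theorem exists_isOpen_abs_sub_le_of_isC1H {γ : ℝ → G} {φ : ℝ → ℝ} (hcont : Continuous E)
    (hγ : IsC1H E γ φ univ) :
    ∃ O : Set ℝ, IsOpen O ∧ O.Nonempty ∧ ∀ t ∈ O, ∀ u ∈ O,
      |dist (E ((u - t) * φ t)) 1 - dist (E ((u - t) * φ u)) 1| ≤ 2 * |u - t| := by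
  obtain ⟨hγ_cont, hφ, hγ_vel⟩ := (isC1H_iff_isLittleO (map_zero_of_map_add hE)).1 hγ
  simp only [continuousOn_univ] at hγ_cont hφ
  let R (t u : ℝ) : Prop := |dist (γ u) (γ t) - dist (E ((u - t) * φ t)) 1| ≤ |u - t|
  have hR_closed (u : ℝ) : IsClosed {t | R t u} := isClosed_le (by fun_prop) (by fun_prop)
  have hR_eventually (t : ℝ) : ∀ᶠ u in 𝓝 t, R t u := by
    have hbound := (hγ_vel t (mem_univ t)).bound one_pos
    rw [nhdsWithin_univ] at hbound
    filter_upwards [hbound] with u hu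
    rw [Real.norm_of_nonneg dist_nonneg, one_mul] at hu
    have htri := abs_dist_sub_le (γ u) (γ t * E ((u - t) * φ t)) (γ t)
    rw [dist_mul_right_self] at htri
    exact htri.trans hu
  obtain ⟨O, hO, hne, hR⟩ := exists_isOpen_forall_of_eventually hR_closed hR_eventually
  refine ⟨O, hO, hne, fun t ht u hu => ?_⟩
  have htu : |dist (γ u) (γ t) - dist (E ((u - t) * φ t)) 1| ≤ |u - t| := hR t ht u hu
  have hut : |dist (γ t) (γ u) - dist (E ((t - u) * φ u)) 1| ≤ |t - u| := hR u hu t ht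
  rw [← neg_sub u t, neg_mul, dist_map_neg_of_map_add hE, abs_neg, dist_comm (γ t)] at hut
  rw [abs_sub_comm] at htu
  calc |dist (E ((u - t) * φ t)) 1 - dist (E ((u - t) * φ u)) 1|
      ≤ |dist (E ((u - t) * φ t)) 1 - dist (γ u) (γ t)|
        + |dist (γ u) (γ t) - dist (E ((u - t) * φ u)) 1| := abs_sub_le _ _ _
    _ ≤ |u - t| + |u - t| := add_le_add htu hut
    _ = 2 * |u - t| := (two_mul _).symm

theorem isBigO_dist_one_of_forall_exists_isC1H
    (hflow : ∀ φ : ℝ → ℝ, Continuous φ → ∃ γ : ℝ → G, IsC1H E γ φ univ) :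
    (fun s => dist (E s) 1) =O[𝓝 0] fun s => s := by
  obtain ⟨γ₀, hγ₀⟩ := hflow _ continuous_const
  have hcont := continuous_of_isC1H hE hγ₀
  have hN : Continuous fun s => dist (E s) 1 := hcont.dist continuous_const
  suffices hosc : ¬OscillatesAtSmallScales (fun s => dist (E s) 1) 2 by
    simpa [map_zero_of_map_add hE] using
      isBigO_sub_of_not_oscillatesAtSmallScales hN.continuousAt hosc
  intro hosc
  obtain ⟨φ, hφ⟩ := hosc.exists_forall_mem_oscillationSet hN
  obtain ⟨γ, hγ⟩ := hflow φ φ.continuous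
  obtain ⟨O, hO, hne, hle⟩ := exists_isOpen_abs_sub_le_of_isC1H hE hcont hγ
  obtain ⟨t, ht, u, hu, hlt⟩ := hφ O hO hne
  exact (hle t ht u hu).not_gt hlt

theorem isC1H_mul_of_hasDerivWithinAt (hLip : (fun s => dist (E s) 1) =O[𝓝 0] fun s => s)
    {f g : ℝ → ℝ} {s : Set ℝ} (hf : ∀ t ∈ s, HasDerivWithinAt f (g t) s t)
    (hg : ContinuousOn g s) (p : G) : IsC1H E (fun t => p * E (f t)) g s := by
  have hE_cont : Continuous E := by
    refine continuous_of_map_add hE (tendsto_iff_dist_tendsto_zero.2 ?_)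
    simpa only [map_zero_of_map_add hE] using hLip.trans_tendsto tendsto_id
  have hf_cont : ContinuousOn f s := fun t ht => (hf t ht).continuousWithinAt
  have hpE_cont : Continuous fun x => p * E x := (isometry_mul_left p).continuous.comp hE_cont
  refine (isC1H_iff_isLittleO (map_zero_of_map_add hE)).2
    ⟨hpE_cont.comp_continuousOn hf_cont, hg, fun t ht => ?_⟩
  have hrem := hasDerivWithinAt_iff_isLittleO.1 (hf t ht)
  have hrem_tendsto : Tendsto (fun u => f u - f t - (u - t) • g t) (𝓝[s] t) (𝓝 0) :=
    hrem.isBigO.trans_tendsto (tendsto_sub_nhds_zero_iff.2 nhdsWithin_le_nhds)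
  have hsmall := (hLip.comp_tendsto hrem_tendsto).trans_isLittleO hrem
  refine hsmall.congr_left fun u => ?_
  rw [mul_assoc, ← hE, dist_mul_left, dist_map_of_map_add hE (f u), ← sub_sub,
    Function.comp_apply]

end OneParameterSubgroup

theorem exists_hasDerivAt_bump {a b : ℝ} (hab : a ≠ b) :
    ∃ f g : ℝ → ℝ, (∀ t, HasDerivAt f (g t) t) ∧ Continuous g ∧ f a = 0 ∧ f b = 0 ∧
      g a = 1 ∧ g b = 0 ∧ ∀ t ∈ uIcc a b, |g t| ≤ 1 := by
  have hab' : a - b ≠ 0 := sub_ne_zero.2 hab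
  let x (t : ℝ) : ℝ := (t - b) / (a - b)
  have hxa : x a = 1 := div_self hab'
  have hxb : x b = 0 := by simp [x]
  have hx_deriv (t : ℝ) : HasDerivAt x (1 / (a - b)) t :=
    ((hasDerivAt_id t).sub_const b).div_const (a - b)
  have hx_mem {t : ℝ} (ht : t ∈ uIcc a b) : x t ∈ Icc 0 1 := by
    rw [uIcc_comm, ← segment_eq_uIcc, segment_eq_image_lineMap] at ht
    obtain ⟨y, hy, rfl⟩ := ht
    rwa [show x (AffineMap.lineMap b a y) = y by simp [x, AffineMap.lineMap_apply_ring', hab']]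
  refine ⟨fun t => (a - b) * (x t ^ 3 - x t ^ 2), fun t => 3 * x t ^ 2 - 2 * x t, fun t => ?_,
    by fun_prop, by simp [hxa], by simp [hxb], by norm_num [hxa], by simp [hxb], fun t ht => ?_⟩
  · refine ((((hx_deriv t).pow 3).sub ((hx_deriv t).pow 2)).const_mul (a - b)).congr_deriv ?_
    push_cast
    field_simp
  · obtain ⟨h0, h1⟩ := hx_mem ht
    rw [abs_le]
    constructor <;> nlinarith [sq_nonneg (3 * x t - 1)]

theorem exists_isC1H_loop [IsIsometricSMul G G] {e : H → G} {v : H}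
    (hexp : ∀ s t : ℝ, e ((s + t) • v) = e (s • v) * e (t • v))
    (hLip : (fun s : ℝ => dist (e (s • v)) 1) =O[𝓝 0] fun s => s) {a b : ℝ} (hab : a ≠ b) (p : G) :
    ∃ γ γ', IsC1H e γ γ' (uIcc a b) ∧ γ a = p ∧ γ b = p ∧ γ' a = v ∧ γ' b = 0 ∧
      ∀ t ∈ uIcc a b, ‖γ' t‖ ≤ ‖v‖ := by
  obtain ⟨f, g, hfg, hg, hfa, hfb, hga, hgb, hg_le⟩ := exists_hasDerivAt_bump hab
  have he : e 0 = 1 := by simpa using hexp 0 0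
  refine ⟨fun t => p * e (f t • v), fun t => g t • v, (isC1H_smul_iff hg.continuousOn).2 ?_,
    by simp [hfa, he], by simp [hfb, he], by simp [hga], by simp [hgb], fun t ht => ?_⟩
  · exact isC1H_mul_of_hasDerivWithinAt hexp hLip (fun t _ => (hfg t).hasDerivWithinAt)
      hg.continuousOn p
  · rw [norm_smul]
    exact mul_le_of_le_one_left (norm_nonneg v) (hg_le t ht)

/-- In a Carnot group, for every pair of horizontal vectors `X, Y`, every point `p` and
every `r > 0` there is a horizontal `C¹` curve `γ` on `[0, r]` with
`γ(0) = γ(r) = p`, `γ'(0) = X`, `γ'(r) = Y` and `sup_t ‖γ'(t)‖ = max(‖X‖, ‖Y‖)`. -/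
theorem connect_velocities_at_point
    (expMap : H → G)
    (hleft : ∀ a p q : G, dist (a * p) (a * q) = dist p q)
    (hexpadd : ∀ (s t : ℝ) (v : H), expMap ((s + t) • v) = expMap (s • v) * expMap (t • v))
    -- in a Carnot group every continuous horizontal velocity profile integrates to a curve
    (hflow : ∀ (q : G) (v : ℝ → H), Continuous v →
      ∃ γ : ℝ → G, γ 0 = q ∧ IsC1H expMap γ v univ)
    (X Y : H) (p : G) (r : ℝ) (hr : 0 < r) :
    ∃ γ γ' : _, IsC1H expMap γ γ' (Icc 0 r) ∧
      γ 0 = p ∧ γ r = p ∧ γ' 0 = X ∧ γ' r = Y ∧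
      (∀ t ∈ Icc (0:ℝ) r, ‖γ' t‖ ≤ max ‖X‖ ‖Y‖) := by
  have : IsIsometricSMul G G := ⟨fun a => .of_dist_eq (hleft a)⟩
  have hLip (v : H) : (fun s : ℝ => dist (expMap (s • v)) 1) =O[𝓝 0] fun s => s := by
    refine isBigO_dist_one_of_forall_exists_isC1H (fun s t => hexpadd s t v) fun φ hφ => ?_
    obtain ⟨γ, -, hγ⟩ := hflow 1 (fun t => φ t • v) (hφ.smul continuous_const)
    exact ⟨γ, (isC1H_smul_iff hφ.continuousOn).1 hγ⟩
  have hloop (v : H) {a b : ℝ} (hab : a ≠ b) :=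
    exists_isC1H_loop (fun s t => hexpadd s t v) (hLip v) hab p
  have hr₁ : 0 ≤ r / 2 := by positivity
  have hr₂ : r / 2 ≤ r := half_le_self hr.le
  obtain ⟨γ₁, γ₁', hγ₁, h₁0, h₁c, h₁0', h₁c', h₁_le⟩ := hloop X (half_pos hr).ne
  obtain ⟨γ₂, γ₂', hγ₂, h₂r, h₂c, h₂r', h₂c', h₂_le⟩ := hloop Y (half_lt_self hr).ne'
  rw [uIcc_of_le hr₁] at hγ₁ h₁_le
  rw [uIcc_of_ge hr₂] at hγ₂ h₂_le
  have hinter := Icc_inter_Icc_eq_singleton hr₁ hr₂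
  obtain ⟨γ, γ', hγ, hγγ₁, hγγ₂, hγγ₁', hγγ₂'⟩ := hγ₁.exists_glue hγ₂ isClosed_Icc isClosed_Icc
    (by simp [hinter, h₁c, h₂c]) (by simp [hinter, h₁c', h₂c'])
  rw [Icc_union_Icc_eq_Icc hr₁ hr₂] at hγ
  refine ⟨γ, γ', hγ, (hγγ₁ ⟨le_rfl, hr₁⟩).trans h₁0, (hγγ₂ ⟨hr₂, le_rfl⟩).trans h₂r,
    (hγγ₁' ⟨le_rfl, hr₁⟩).trans h₁0', (hγγ₂' ⟨hr₂, le_rfl⟩).trans h₂r', fun t ht => ?_⟩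
  rcases le_total t (r / 2) with htc | hct
  · exact hγγ₁' ⟨ht.1, htc⟩ ▸ (h₁_le t ⟨ht.1, htc⟩).trans (le_max_left _ _)
  · exact hγγ₂' ⟨hct, ht.2⟩ ▸ (h₂_le t ⟨hct, ht.2⟩).trans (le_max_right _ _)
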